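/- Let (Q', 𝒜) be a measurable space with a probability measure μ, let 𝒫 be a ground set, and let f : 𝒫 × Q' → [0,∞) satisfy 0 ≤ f(p,q) ≤ M for every p ∈ 𝒫 and q ∈ Q' (with each map q ↦ f(p,q) measurable), where M > 0. Let P ⊆ 𝒫 be a finite set with weights w : P → [0,∞) satisfying Σ_{p∈P} w(p) = 1, and let C ⊆ 𝒫 be a finite set with weights u : C → [0,∞) satisfying |Σ_{p∈P} w(p) − Σ_{c∈C} u(c)| ≤ ε, where ε > 0. Let δ ∈ (0,1), and let q₁,…,q_k be independent Q'-valued random variables with common distribution μ, where k ≥ 2·((1+ε)·M)²·ln(2/δ)/ε². Then with probability at least 1−2δ the following implication holds: if |(1/k)·Σ_{i=1}^{k} f(P,w,q_i) − (1/k)·Σ_{i=1}^{k} f(C,u,q_i)| ≤ ε, then |E_μ[f(P,w,q)] − E_μ[f(C,u,q)]| ≤ 3ε. -/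

import Mathlib

open MeasureTheory ProbabilityTheory

/-!
Both total costs take values in `[0, (1 + ε) * M]`, so their difference takes values in
`[-(1 + ε) * M, (1 + ε) * M]`. A single application of Hoeffding's inequality to this difference
therefore controls both costs at once: no union bound over `(P, w)` and `(C, u)` is needed, and the
sampled and the expected difference are `ε`-close with probability at least `1 - δ`.
-/

section Concentration

variable {Ω Q ι : Type*} [MeasurableSpace Ω] [MeasurableSpace Q] {Pr : Measure Ω} {μ : Measure Q}

lemma measureReal_le_abs_le_of_hasSubgaussianMGF {Y : Ω → ℝ} {c : NNReal}
    (hY : HasSubgaussianMGF Y c Pr) {t : ℝ} (ht : 0 ≤ t) :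
    Pr.real {ω | t ≤ |Y ω|} ≤ 2 * Real.exp (-t ^ 2 / (2 * c)) := by
  have union_eq : {ω | t ≤ |Y ω|} = {ω | t ≤ Y ω} ∪ {ω | t ≤ (-Y) ω} := by
    ext ω
    simp [le_abs]
  calc Pr.real {ω | t ≤ |Y ω|}
      ≤ Pr.real {ω | t ≤ Y ω} + Pr.real {ω | t ≤ (-Y) ω} := union_eq ▸ measureReal_union_le _ _
    _ ≤ 2 * Real.exp (-t ^ 2 / (2 * c)) := by
        linarith [hY.measure_ge_le ht, hY.neg.measure_ge_le ht]

variable [Fintype ι] [IsProbabilityMeasure μ] {X : ι → Ω → Q} {g : Q → ℝ} {a b ε δ : ℝ}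

lemma hasSubgaussianMGF_sum_sub_integral (hX : ∀ i, HasLaw (X i) μ Pr)
    (hX_indep : iIndepFun X Pr) (hg_meas : AEMeasurable g μ)
    (hg : ∀ᵐ q ∂μ, g q ∈ Set.Icc a b) :
    HasSubgaussianMGF (fun ω ↦ ∑ i, (g (X i ω) - ∫ q, g q ∂μ))
      (Fintype.card ι * (‖b - a‖₊ / 2) ^ 2) Pr := by
  have centred_indep : iIndepFun (fun i ω ↦ g (X i ω) - ∫ q, g q ∂μ) Pr :=
    hX_indep.comp₀ (fun _ q ↦ g q - ∫ q, g q ∂μ) (fun i ↦ (hX i).aemeasurable)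
      fun i ↦ by simpa only [(hX i).map_eq] using hg_meas.sub_const _
  have centred_subgaussian (i : ι) :
      HasSubgaussianMGF (fun ω ↦ g (X i ω) - ∫ q, g q ∂μ) ((‖b - a‖₊ / 2) ^ 2) Pr := by
    refine .of_map (X := fun q ↦ g q - ∫ q, g q ∂μ) (hX i).aemeasurable ?_
    rw [(hX i).map_eq]
    exact hasSubgaussianMGF_of_mem_Icc hg_meas hg
  simpa using HasSubgaussianMGF.sum_of_iIndepFun centred_indep (s := Finset.univ)
    fun i _ ↦ centred_subgaussian i

lemma measureReal_le_abs_average_sub_integral_le (hX : ∀ i, HasLaw (X i) μ Pr)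
    (hX_indep : iIndepFun X Pr) (hg_meas : AEMeasurable g μ)
    (hg : ∀ᵐ q ∂μ, g q ∈ Set.Icc a b) (hε : 0 ≤ ε) :
    Pr.real {ω | ε ≤ |(1 / (Fintype.card ι : ℝ)) * ∑ i, g (X i ω) - ∫ q, g q ∂μ|} ≤
      2 * Real.exp (-(2 * Fintype.card ι * ε ^ 2 / (b - a) ^ 2)) := by
  have := hX_indep.isProbabilityMeasure
  have tail := measureReal_le_abs_le_of_hasSubgaussianMGF
    (hasSubgaussianMGF_sum_sub_integral hX hX_indep hg_meas hg)
    (t := Fintype.card ι * ε) (by positivity)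
  rcases isEmpty_or_nonempty ι with hι | hι
  · exact measureReal_le_one.trans (by simp)
  have card_pos : (0 : ℝ) < Fintype.card ι := by exact_mod_cast Fintype.card_pos
  convert tail using 4 with ω
  · have sum_sub : ∑ i, (g (X i ω) - ∫ q, g q ∂μ) = Fintype.card ι *
        ((1 / (Fintype.card ι : ℝ)) * ∑ i, g (X i ω) - ∫ q, g q ∂μ) := by
      rw [Finset.sum_sub_distrib, Finset.sum_const, Finset.card_univ, nsmul_eq_mul]
      field_simp
    rw [sum_sub, abs_mul, abs_of_pos card_pos, mul_le_mul_iff_right₀ card_pos]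
  · push_cast
    rw [Real.norm_eq_abs, div_pow, sq_abs]
    field_simp

lemma one_sub_le_measureReal_abs_average_sub_integral_lt (hX : ∀ i, HasLaw (X i) μ Pr)
    (hX_indep : iIndepFun X Pr) (hg_meas : AEMeasurable g μ)
    (hg : ∀ᵐ q ∂μ, g q ∈ Set.Icc a b) (hab : a < b) (hε : 0 < ε) (hδ : 0 < δ)
    (hcard : (b - a) ^ 2 * Real.log (2 / δ) / (2 * ε ^ 2) ≤ Fintype.card ι) :
    1 - δ ≤ Pr.real {ω | |(1 / (Fintype.card ι : ℝ)) * ∑ i, g (X i ω) - ∫ q, g q ∂μ| < ε} := by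
  have := hX_indep.isProbabilityMeasure
  have width_pos : 0 < b - a := sub_pos.2 hab
  have log_le : Real.log (2 / δ) ≤ 2 * Fintype.card ι * ε ^ 2 / (b - a) ^ 2 := by
    rw [div_le_iff₀ (by positivity)] at hcard
    rw [le_div_iff₀ (by positivity)]
    linarith
  have failure_le : 2 * Real.exp (-(2 * Fintype.card ι * ε ^ 2 / (b - a) ^ 2)) ≤ δ :=
    calc 2 * Real.exp (-(2 * Fintype.card ι * ε ^ 2 / (b - a) ^ 2))
        ≤ 2 * Real.exp (-Real.log (2 / δ)) := by gcongr
      _ = δ := by rw [Real.exp_neg, Real.exp_log (by positivity)]; field_simp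
  set success := {ω | |(1 / (Fintype.card ι : ℝ)) * ∑ i, g (X i ω) - ∫ q, g q ∂μ| < ε}
  have compl_eq : successᶜ =
      {ω | ε ≤ |(1 / (Fintype.card ι : ℝ)) * ∑ i, g (X i ω) - ∫ q, g q ∂μ|} := by
    ext ω
    simp [success]
  have compl_le : Pr.real successᶜ ≤ δ := compl_eq ▸
    (measureReal_le_abs_average_sub_integral_le hX hX_indep hg_meas hg hε.le).trans failure_le
  have one_le : 1 ≤ Pr.real success + Pr.real successᶜ := by
    simpa using measureReal_union_le (μ := Pr) success successᶜ
  linarith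

end Concentration

section TotalCost

variable {α Q : Type*}

/-- The total cost `f(S, v, q)` of the query `q` on the weighted set `(S, v)`. The weights `v` are
defined on the whole ground set `α`, but only their values on `S` matter. -/
def totalCost (f : α → Q → ℝ) (S : Finset α) (v : α → ℝ) (q : Q) : ℝ :=
  ∑ s ∈ S, v s * f s q

variable {f : α → Q → ℝ} {S : Finset α} {v : α → ℝ} {M W : ℝ}

lemma totalCost_mem_Icc {q : Q} (hf : ∀ s ∈ S, f s q ∈ Set.Icc 0 M)
    (hv : ∀ s ∈ S, 0 ≤ v s) (hvsum : ∑ s ∈ S, v s ≤ W) (hM : 0 ≤ M) :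
    totalCost f S v q ∈ Set.Icc 0 (W * M) := by
  refine ⟨Finset.sum_nonneg fun s hs ↦ mul_nonneg (hv s hs) (hf s hs).1, ?_⟩
  calc ∑ s ∈ S, v s * f s q
      ≤ ∑ s ∈ S, v s * M :=
        Finset.sum_le_sum fun s hs ↦ mul_le_mul_of_nonneg_left (hf s hs).2 (hv s hs)
    _ = (∑ s ∈ S, v s) * M := (Finset.sum_mul ..).symm
    _ ≤ W * M := mul_le_mul_of_nonneg_right hvsum hM

variable [MeasurableSpace Q] {μ : Measure Q}

lemma aemeasurable_totalCost (hf_meas : ∀ s ∈ S, AEMeasurable (f s) μ) :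
    AEMeasurable (totalCost f S v) μ :=
  Finset.aemeasurable_fun_sum S fun s hs ↦ (hf_meas s hs).const_mul _

lemma ae_totalCost_mem_Icc (hf : ∀ s ∈ S, ∀ᵐ q ∂μ, f s q ∈ Set.Icc 0 M)
    (hv : ∀ s ∈ S, 0 ≤ v s) (hvsum : ∑ s ∈ S, v s ≤ W) (hM : 0 ≤ M) :
    ∀ᵐ q ∂μ, totalCost f S v q ∈ Set.Icc 0 (W * M) := by
  filter_upwards [(Filter.eventually_all_finset S).2 hf] with q hq
  exact totalCost_mem_Icc hq hv hvsum hM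

end TotalCost

theorem autoCL_generalization_general
    {Q : Type*} [MeasurableSpace Q] {μ : Measure Q} [IsProbabilityMeasure μ]
    {α : Type*} {f : α → Q → ℝ} {M : ℝ} (hM : 0 < M)
    (hf_meas : ∀ p, AEMeasurable (f p) μ) (hf : ∀ p, ∀ᵐ q ∂μ, f p q ∈ Set.Icc 0 M)
    {P C : Finset α} {w u : α → ℝ} (hw : ∀ p ∈ P, 0 ≤ w p) (hu : ∀ c ∈ C, 0 ≤ u c)
    {W : ℝ} (hW : 0 < W) (hwsum : ∑ p ∈ P, w p ≤ W) (husum : ∑ c ∈ C, u c ≤ W)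
    {ε δ : ℝ} (hε : 0 < ε) (hδ : 0 < δ)
    {Ω : Type*} [MeasurableSpace Ω] {Pr : Measure Ω} {ι : Type*} [Fintype ι]
    (hcard : 2 * (W * M) ^ 2 * Real.log (2 / δ) / ε ^ 2 ≤ Fintype.card ι)
    {X : ι → Ω → Q} (hX : ∀ i, HasLaw (X i) μ Pr) (hX_indep : iIndepFun X Pr) :
    1 - δ ≤ Pr.real {ω |
      |∫ q, totalCost f P w q ∂μ - ∫ q, totalCost f C u q ∂μ| ≤
        |(1 / (Fintype.card ι : ℝ)) * ∑ i, totalCost f P w (X i ω)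
          - (1 / (Fintype.card ι : ℝ)) * ∑ i, totalCost f C u (X i ω)| + ε} := by
  have := hX_indep.isProbabilityMeasure
  have costP_meas := aemeasurable_totalCost (S := P) (v := w) fun p _ ↦ hf_meas p
  have costC_meas := aemeasurable_totalCost (S := C) (v := u) fun c _ ↦ hf_meas c
  have costP_mem := ae_totalCost_mem_Icc (fun p _ ↦ hf p) hw hwsum hM.le
  have costC_mem := ae_totalCost_mem_Icc (fun c _ ↦ hf c) hu husum hM.le
  have diff_mem : ∀ᵐ q ∂μ, totalCost f P w q - totalCost f C u q ∈
      Set.Icc (-(W * M)) (W * M) := by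
    filter_upwards [costP_mem, costC_mem] with q hPq hCq
    exact ⟨by linarith [hPq.1, hCq.2], by linarith [hPq.2, hCq.1]⟩
  have concentration := one_sub_le_measureReal_abs_average_sub_integral_lt hX hX_indep
    (costP_meas.sub costC_meas) diff_mem (neg_lt_self (mul_pos hW hM)) hε hδ
    (by convert hcard using 1; field_simp; ring)
  refine concentration.trans (measureReal_mono fun ω close ↦ ?_)
  simp only [Set.mem_ofPred_eq, Pi.sub_apply, Finset.sum_sub_distrib, mul_sub,
    integral_sub (.of_mem_Icc _ _ costP_meas costP_mem) (.of_mem_Icc _ _ costC_meas costC_mem)]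
    at close ⊢
  rw [abs_sub_comm] at close
  linarith [abs_sub_abs_le_abs_sub (∫ q, totalCost f P w q ∂μ - ∫ q, totalCost f C u q ∂μ)
    ((1 / (Fintype.card ι : ℝ)) * ∑ i, totalCost f P w (X i ω)
          - (1 / (Fintype.card ι : ℝ)) * ∑ i, totalCost f C u (X i ω))]

/-- **Claim 2 (main theorem).** If the loss `f` is bounded by `M` on the ground set, the
input weights sum to `1`, the coreset weight sum is within `ε` of the input weight sum,
and `k ≥ 2((1+ε)M)²ln(2/δ)/ε²` queries are sampled i.i.d. from `μ`, then with probability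
at least `1 - 2δ`: whenever the empirical average losses of `(P,w)` and `(C,u)` over the
sample are within `ε` of each other, the expected losses are within `3ε` of each other,
i.e. `(C,u)` is a `(3ε,μ)`-coreset. -/
theorem autoCL_generalization
    {Q' : Type*} [MeasurableSpace Q'] (μ : Measure Q') [IsProbabilityMeasure μ]
    {α : Type*} (f : α → Q' → ℝ) (M : ℝ) (hM : 0 < M)
    (hf_nonneg : ∀ (p : α) (q : Q'), 0 ≤ f p q)
    (hf_bound : ∀ (p : α) (q : Q'), f p q ≤ M)
    (hf_meas : ∀ p : α, Measurable (f p))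
    (P : Finset α) (w : α → ℝ) (hw : ∀ p ∈ P, 0 ≤ w p)
    (hwsum : ∑ p ∈ P, w p = 1)
    (C : Finset α) (u : α → ℝ) (hu : ∀ c ∈ C, 0 ≤ u c)
    (ε : ℝ) (hε : 0 < ε)
    (husum : |∑ p ∈ P, w p - ∑ c ∈ C, u c| ≤ ε)
    (δ : ℝ) (hδ : δ ∈ Set.Ioo (0 : ℝ) 1)
    {Ω : Type*} [MeasurableSpace Ω] (Pr : Measure Ω) [IsProbabilityMeasure Pr]
    (k : ℕ) (hk : (k : ℝ) ≥ 2 * ((1 + ε) * M) ^ 2 * Real.log (2 / δ) / ε ^ 2)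
    (X : Fin k → Ω → Q')
    (hX_meas : ∀ i, Measurable (X i))
    (hX_indep : iIndepFun (m := fun _ => ‹MeasurableSpace Q'›) X Pr)
    (hX_dist : ∀ i, Measure.map (X i) Pr = μ) :
    Pr {ω : Ω |
        |(1 / (k : ℝ)) * ∑ i : Fin k, ∑ p ∈ P, w p * f p (X i ω)
            - (1 / (k : ℝ)) * ∑ i : Fin k, ∑ c ∈ C, u c * f c (X i ω)| ≤ ε →
          |(∫ q, (∑ p ∈ P, w p * f p q) ∂μ) - ∫ q, (∑ c ∈ C, u c * f c q) ∂μ| ≤ 3 * ε}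
      ≥ ENNReal.ofReal (1 - 2 * δ) := by
  have hwsum_le : ∑ p ∈ P, w p ≤ 1 + ε := by linarith
  have husum_le : ∑ c ∈ C, u c ≤ 1 + ε := by linarith [(abs_le.1 husum).1]
  have gap_le := autoCL_generalization_general hM (fun p ↦ (hf_meas p).aemeasurable)
    (fun p ↦ .of_forall fun q ↦ ⟨hf_nonneg p q, hf_bound p q⟩) hw hu (by positivity)
    hwsum_le husum_le hε hδ.1 (by simpa using hk) (fun i ↦ ⟨(hX_meas i).aemeasurable, hX_dist i⟩)
    hX_indep
  simp only [totalCost, Fintype.card_fin] at gap_le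
  refine ENNReal.ofReal_le_of_le_toReal ((?_ : 1 - 2 * δ ≤ 1 - δ).trans
    (gap_le.trans (measureReal_mono fun ω gap_le_at_ω close ↦ gap_le_at_ω.trans ?_)))
  · linarith [hδ.1]
  · linarith
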